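/- Let R be a commutative integral domain, let n ≥ 1, let F be a nonzero Laurent polynomial in n variables over R, and let s be a positive integer. Then the Newton polytope of F^s equals the s-fold dilation of the Newton polytope of F: Δ(F^s) = s • Δ(F), where s • Δ(F) denotes the image of Δ(F) under scalar multiplication by s in ℝⁿ. -/

import Mathlib

open scoped Pointwise

noncomputable section

/-- The coordinatewise embedding of `ℤⁿ` into `ℝⁿ`. -/
def emb (n : ℕ) : (Fin n → ℤ) → (Fin n → ℝ) := fun u i => (u i : ℝ)

/-- The Newton polytope of a Laurent polynomial `F` in `n` variables over `R`:
the convex hull in `ℝⁿ` of the (finite) set of exponents `u ∈ ℤⁿ` at which the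
coefficient `[F]_u` is nonzero. -/
def newton {R : Type*} [CommSemiring R] {n : ℕ} (F : AddMonoidAlgebra R (Fin n → ℤ)) :
    Set (Fin n → ℝ) :=
  convexHull ℝ (emb n '' {u | F.coeff u ≠ 0})

lemma emb_add' {n : ℕ} (a b : Fin n → ℤ) : emb n (a + b) = emb n a + emb n b := by
  ext i; simp [emb]

lemma emb_inj' {n : ℕ} {a b : Fin n → ℤ} (h : emb n a = emb n b) : a = b := by
  ext i; simpa [emb] using congrFun h i

lemma emb_nsmul' {n : ℕ} (k : ℕ) (a : Fin n → ℤ) : emb n (k • a) = (k : ℝ) • emb n a := by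
  ext i; simp [emb]

lemma exists_of_coeff_mul {R : Type*} [CommRing R] {n : ℕ}
    {F G : AddMonoidAlgebra R (Fin n → ℤ)} {u : Fin n → ℤ} (h : (F * G).coeff u ≠ 0) :
    ∃ a b, F.coeff a ≠ 0 ∧ G.coeff b ≠ 0 ∧ a + b = u := by
  classical
  rw [AddMonoidAlgebra.coeff_mul] at h
  obtain ⟨a, ha, h⟩ := Finset.exists_ne_zero_of_sum_ne_zero h
  obtain ⟨b, hb, h⟩ := Finset.exists_ne_zero_of_sum_ne_zero h
  refine ⟨a, b, by simpa using ha, by simpa using hb, ?_⟩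
  by_contra hc
  exact h (if_neg hc)

lemma coeff_mem_newton {R : Type*} [CommRing R] {n : ℕ}
    {F : AddMonoidAlgebra R (Fin n → ℤ)} {u : Fin n → ℤ} (h : F.coeff u ≠ 0) :
    emb n u ∈ newton F := subset_convexHull ℝ _ ⟨u, h, rfl⟩

lemma supp_pow {R : Type*} [CommRing R] {n : ℕ}
    (F : AddMonoidAlgebra R (Fin n → ℤ)) (k : ℕ) : ∀ u : Fin n → ℤ,
    (F ^ (k + 1)).coeff u ≠ 0 → emb n u ∈ ((k + 1 : ℕ) : ℝ) • newton F := by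
  induction k with
  | zero => intro u h; simpa using coeff_mem_newton (F := F) (by simpa using h)
  | succ k ih =>
    intro u h
    rw [pow_succ] at h
    obtain ⟨a, b, ha, hb, rfl⟩ := exists_of_coeff_mul h
    have hc : Convex ℝ (newton F) := convex_convexHull ℝ _
    rw [Nat.cast_succ (k + 1), hc.add_smul
      (Nat.cast_nonneg _) zero_le_one, one_smul, emb_add']
    exact Set.add_mem_add (ih a ha) (coeff_mem_newton hb)

lemma coeff_extreme {R : Type*} [CommRing R] {n : ℕ}
    (F : AddMonoidAlgebra R (Fin n → ℤ)) (u : Fin n → ℤ)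
    (hu : emb n u ∈ (newton F).extremePoints ℝ) (k : ℕ) :
    (F ^ (k + 1)).coeff ((k + 1) • u) = F.coeff u ^ (k + 1) := by
  induction k with
  | zero => simp
  | succ k ih =>
    rw [pow_succ, succ_nsmul, AddMonoidAlgebra.coeff_mul_add_of_uniqueAdd, ih, ← pow_succ]
    intro a b ha hb hab
    obtain ⟨x, hx, hxa⟩ := supp_pow F k a (by simpa using ha)
    have hb' := coeff_mem_newton (F := F) (u := b) (by simpa using hb)
    have e := congrArg (emb n) hab
    simp only [emb_add', emb_nsmul', ← hxa] at e
    have hk : (0 : ℝ) < ((k + 1 : ℕ) : ℝ) := by positivity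
    generalize ((k + 1 : ℕ) : ℝ) = c at *
    have hseg : emb n u ∈ openSegment ℝ x (emb n b) := by
      refine ⟨c / (c + 1), 1 / (c + 1), by positivity, by positivity, by field_simp, ?_⟩
      ext i
      have := congrFun e i
      simp only [Pi.add_apply, Pi.smul_apply, smul_eq_mul] at this ⊢
      field_simp
      linarith
    obtain ⟨h1, h2⟩ := (mem_extremePoints.1 hu).2 x hx _ hb' hseg
    have hbu := emb_inj' h2
    subst hbu
    exact ⟨add_right_cancel hab, rfl⟩

lemma finite_emb {R : Type*} [CommRing R] {n : ℕ}
    (F : AddMonoidAlgebra R (Fin n → ℤ)) : (emb n '' {u | F.coeff u ≠ 0}).Finite := by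
  refine Set.Finite.image _ (F.coeff.support.finite_toSet.subset ?_)
  intro u hu
  simpa using hu

/-- For a commutative integral domain `R`, `n ≥ 1`, a nonzero Laurent polynomial
`F ∈ R[x₁,x₁⁻¹,…,xₙ,xₙ⁻¹]`, and a positive integer `s`, the Newton polytope of `F^s` is the
`s`-fold dilation `s • Δ(F)` of the Newton polytope of `F`, i.e. the image of `Δ(F)` under
scalar multiplication by `s` in `ℝⁿ`. -/
theorem newton_pow {R : Type*} [CommRing R] [IsDomain R] {n : ℕ} (hn : 1 ≤ n)
    (F : AddMonoidAlgebra R (Fin n → ℤ)) (hF : F ≠ 0) (s : ℕ) (hs : 1 ≤ s) :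
    newton (F ^ s) = (s : ℝ) • newton F := by
  obtain ⟨k, rfl⟩ : ∃ k, s = k + 1 := ⟨s - 1, by omega⟩
  have hk : ((k + 1 : ℕ) : ℝ) ≠ 0 := by positivity
  apply Set.Subset.antisymm
  · refine convexHull_min ?_ ((convex_convexHull ℝ _).smul _)
    rintro _ ⟨u, hu, rfl⟩
    exact supp_pow F k u hu
  · rw [Set.smul_set_subset_iff₀ hk]
    have hconv : Convex ℝ (((k + 1 : ℕ) : ℝ)⁻¹ • newton (F ^ (k + 1))) :=
      (convex_convexHull ℝ _).smul _
    have hcl : IsClosed (((k + 1 : ℕ) : ℝ)⁻¹ • newton (F ^ (k + 1))) :=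
      (((finite_emb (F ^ (k + 1))).isCompact_convexHull (𝕜 := ℝ)).smul _).isClosed
    have hcomp : IsCompact (newton F) := (finite_emb F).isCompact_convexHull (𝕜 := ℝ)
    rw [← closure_convexHull_extremePoints hcomp (convex_convexHull ℝ _)]
    refine closure_minimal (convexHull_min ?_ hconv) hcl
    intro e he
    obtain ⟨u, hu, rfl⟩ := extremePoints_convexHull_subset he
    rw [Set.mem_inv_smul_set_iff₀ hk, ← emb_nsmul']
    apply coeff_mem_newton
    rw [coeff_extreme F u he k]
    exact pow_ne_zero _ hu
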